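/- Define f(r) := ∫_0^r f'(s) ds, where f'(s) := (1/2)∫_s^∞ u·exp(−(1/2)∫_s^u x·θ(x) dx) du. Then for every r ≥ 0 one has the two-sided linear bounds (1/κ)·r ≤ f(r) ≤ f'(0)·r, where f'(0) = exp(L·R₁²/4)·κ^{-1} + (exp(L·R₁²/4) − 1)·L^{-1}. -/

import Mathlib

/-- The piecewise function `θ(x) = -L` for `x < R₁` and `θ(x) = κ` for `x ≥ R₁`. -/
noncomputable def theta (κ L R₁ : ℝ) : ℝ → ℝ := fun x => if x < R₁ then -L else κ

/-- `f'(s) = (1/2)∫_s^∞ u · exp(-(1/2)∫_s^u x·θ(x) dx) du`. -/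
noncomputable def fPrime (κ L R₁ : ℝ) (s : ℝ) : ℝ :=
  (1 / 2) * ∫ u in Set.Ioi s, u * Real.exp (-(1 / 2) * ∫ x in s..u, x * theta κ L R₁ x)

/-- `f(r) = ∫_0^r f'(s) ds`. -/
noncomputable def fAux (κ L R₁ : ℝ) (r : ℝ) : ℝ := ∫ s in (0 : ℝ)..r, fPrime κ L R₁ s

open MeasureTheory Set Filter Topology

lemma aux_tail (κ c a : ℝ) (hκ : 0 < κ) (ha : 0 ≤ a) :
    IntegrableOn (fun u : ℝ => u * Real.exp (c - κ / 4 * u ^ 2)) (Ioi a) ∧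
    ∫ u in Ioi a, u * Real.exp (c - κ / 4 * u ^ 2) = 2 / κ * Real.exp (c - κ / 4 * a ^ 2) := by
  have hd : ∀ x ∈ Ici a, HasDerivAt (fun u : ℝ => -(2 / κ) * Real.exp (c - κ / 4 * u ^ 2))
      (x * Real.exp (c - κ / 4 * x ^ 2)) x := by
    intro x _
    have h := (((((hasDerivAt_id x).pow 2).const_mul (κ / 4)).const_sub c).exp).const_mul (-(2 / κ))
    refine h.congr_deriv ?_
    simp
    field_simp
    try norm_num
  have hp : ∀ x ∈ Ioi a, 0 ≤ x * Real.exp (c - κ / 4 * x ^ 2) := by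
    intro x hx
    have : 0 ≤ x := ha.trans (le_of_lt hx)
    positivity
  have ht : Tendsto (fun u : ℝ => -(2 / κ) * Real.exp (c - κ / 4 * u ^ 2)) atTop (𝓝 0) := by
    have h1 : Tendsto (fun u : ℝ => κ / 4 * u ^ 2) atTop atTop :=
      (tendsto_pow_atTop (by norm_num)).const_mul_atTop (by positivity)
    have h2 : Tendsto (fun u : ℝ => c - κ / 4 * u ^ 2) atTop atBot := by
      simpa [sub_eq_add_neg] using
        tendsto_atBot_add_const_left atTop c (tendsto_neg_atTop_atBot.comp h1)
    simpa using (Real.tendsto_exp_atBot.comp h2).const_mul (-(2 / κ))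
  refine ⟨integrableOn_Ioi_deriv_of_nonneg' hd hp ht, ?_⟩
  rw [integral_Ioi_of_hasDerivAt_of_nonneg' hd hp ht]
  ring

lemma aux_head (L c a b : ℝ) (hL : 0 < L) :
    ∫ u in a..b, u * Real.exp (c + L / 4 * u ^ 2) =
      2 / L * (Real.exp (c + L / 4 * b ^ 2) - Real.exp (c + L / 4 * a ^ 2)) := by
  have hd : ∀ x ∈ uIcc a b, HasDerivAt (fun u : ℝ => (2 / L) * Real.exp (c + L / 4 * u ^ 2))
      (x * Real.exp (c + L / 4 * x ^ 2)) x := by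
    intro x _
    have h := (((((hasDerivAt_id x).pow 2).const_mul (L / 4)).const_add c).exp).const_mul (2 / L)
    refine h.congr_deriv ?_
    simp
    field_simp
    try norm_num
  rw [intervalIntegral.integral_eq_sub_of_hasDerivAt hd
    (Continuous.intervalIntegrable (by fun_prop) _ _)]
  ring

lemma inner_hi (κ L R s u : ℝ) (hs : R ≤ s) (hu : s ≤ u) :
    ∫ x in s..u, x * theta κ L R x = κ * (u ^ 2 - s ^ 2) / 2 := by
  rw [intervalIntegral.integral_congr_Ioo_of_le (g := fun x => x * κ) hu]
  · rw [intervalIntegral.integral_mul_const, integral_id]; ring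
  · intro x hx
    have : ¬ x < R := not_lt.2 (hs.trans hx.1.le)
    simp [theta, this]

lemma inner_lo (κ L R s u : ℝ) (hs : u ≤ R) (hu : s ≤ u) :
    ∫ x in s..u, x * theta κ L R x = -L * (u ^ 2 - s ^ 2) / 2 := by
  rw [intervalIntegral.integral_congr_Ioo_of_le (g := fun x => x * (-L)) hu]
  · rw [intervalIntegral.integral_mul_const, integral_id]; ring
  · intro x hx
    have : x < R := hx.2.trans_le hs
    simp [theta, this]

lemma theta_ii (κ L R a b : ℝ) :
    IntervalIntegrable (fun x => x * theta κ L R x) volume a b := by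
  have h : IntervalIntegrable (theta κ L R) volume a b := by
    refine (intervalIntegrable_const (c := |κ| + |L|)).mono_fun ?_ ?_
    · exact (Measurable.ite measurableSet_Iio measurable_const
        measurable_const).aestronglyMeasurable
    · refine ae_of_all _ fun x => ?_
      have h1 := abs_nonneg κ
      have h2 := abs_nonneg L
      simp only [theta, Real.norm_eq_abs, abs_of_nonneg (add_nonneg h1 h2)]
      split_ifs
      · rw [abs_neg]; linarith
      · linarith
  exact h.continuousOn_mul continuousOn_id

lemma fPrime_eq (κ L R s : ℝ) (hκ : 0 < κ) (hL : 0 < L) (hR : 0 ≤ R) (hs : 0 ≤ s) :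
    fPrime κ L R s = Real.exp (L * (R ^ 2 - (min s R) ^ 2) / 4) * κ⁻¹ +
      (Real.exp (L * (R ^ 2 - (min s R) ^ 2) / 4) - 1) * L⁻¹ := by
  unfold fPrime
  rcases le_total R s with h | h
  · rw [min_eq_right h]
    have : ∫ u in Ioi s, u * Real.exp (-(1 / 2) * ∫ x in s..u, x * theta κ L R x) =
        ∫ u in Ioi s, u * Real.exp (κ / 4 * s ^ 2 - κ / 4 * u ^ 2) := by
      refine setIntegral_congr_fun measurableSet_Ioi fun u hu => ?_
      show _ * _ = _ * _
      rw [inner_hi κ L R s u h (le_of_lt hu)]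
      congr 2; ring
    rw [this, (aux_tail κ _ s hκ hs).2]
    simp
    field_simp
  · rw [min_eq_left h]
    set c := L / 4 * (R ^ 2 - s ^ 2) + κ / 4 * R ^ 2 with hc
    have e1 : EqOn (fun u => u * Real.exp (-(1 / 2) * ∫ x in s..u, x * theta κ L R x))
        (fun u => u * Real.exp (-(L / 4 * s ^ 2) + L / 4 * u ^ 2)) (Ioc s R) := by
      intro u hu
      simp only
      rw [inner_lo κ L R s u hu.2 hu.1.le]
      congr 2; ring
    have e2 : EqOn (fun u => u * Real.exp (-(1 / 2) * ∫ x in s..u, x * theta κ L R x))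
        (fun u => u * Real.exp (c - κ / 4 * u ^ 2)) (Ioi R) := by
      intro u hu
      simp only
      rw [← intervalIntegral.integral_add_adjacent_intervals (theta_ii κ L R s R)
        (theta_ii κ L R R u), inner_lo κ L R s R le_rfl h, inner_hi κ L R R u le_rfl (le_of_lt hu)]
      congr 2; rw [hc]; ring
    have ht := aux_tail κ c R hκ hR
    have hi : IntegrableOn (fun u => u * Real.exp (-(L / 4 * s ^ 2) + L / 4 * u ^ 2)) (Ioc s R) :=
      (Continuous.integrableOn_Icc (by fun_prop)).mono_set Ioc_subset_Icc_self
    rw [← Ioc_union_Ioi_eq_Ioi h, setIntegral_union (Ioc_disjoint_Ioi le_rfl) measurableSet_Ioi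
      (hi.congr_fun e1.symm measurableSet_Ioc) (ht.1.congr_fun e2.symm measurableSet_Ioi),
      setIntegral_congr_fun measurableSet_Ioc e1, setIntegral_congr_fun measurableSet_Ioi e2,
      ht.2, ← intervalIntegral.integral_of_le h, aux_head L _ s R hL]
    have a1 : c - κ / 4 * R ^ 2 = L * (R ^ 2 - s ^ 2) / 4 := by rw [hc]; ring
    have a2 : -(L / 4 * s ^ 2) + L / 4 * R ^ 2 = L * (R ^ 2 - s ^ 2) / 4 := by ring
    have a3 : -(L / 4 * s ^ 2) + L / 4 * s ^ 2 = 0 := by ring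
    rw [a1, a2, a3, Real.exp_zero]
    ring

theorem fAux_linear_bounds (κ L R₁ : ℝ) (hκ : 0 < κ) (hL : 0 < L) (hR₁ : 0 ≤ R₁)
    (r : ℝ) (hr : 0 ≤ r) :
    (1 / κ) * r ≤ fAux κ L R₁ r ∧
    fAux κ L R₁ r ≤
      (Real.exp (L * R₁ ^ 2 / 4) * κ⁻¹ + (Real.exp (L * R₁ ^ 2 / 4) - 1) * L⁻¹) * r := by
  have hf : fAux κ L R₁ r = ∫ s in (0 : ℝ)..r,
      (Real.exp (L * (R₁ ^ 2 - (min s R₁) ^ 2) / 4) * κ⁻¹ +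
      (Real.exp (L * (R₁ ^ 2 - (min s R₁) ^ 2) / 4) - 1) * L⁻¹) := by
    unfold fAux
    refine intervalIntegral.integral_congr_Ioo_of_le hr fun s hs => ?_
    exact fPrime_eq κ L R₁ s hκ hL hR₁ hs.1.le
  have hk : 0 < κ⁻¹ := inv_pos.2 hκ
  have hl : 0 < L⁻¹ := inv_pos.2 hL
  have hint : IntervalIntegrable (fun s : ℝ =>
      (Real.exp (L * (R₁ ^ 2 - (min s R₁) ^ 2) / 4) * κ⁻¹ +
      (Real.exp (L * (R₁ ^ 2 - (min s R₁) ^ 2) / 4) - 1) * L⁻¹)) volume 0 r :=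
    Continuous.intervalIntegrable (by fun_prop) _ _
  rw [hf]
  constructor
  · have h := intervalIntegral.integral_mono_on hr
      (intervalIntegrable_const (c := κ⁻¹)) hint (fun s hs => by
        have hm : 0 ≤ min s R₁ := le_min hs.1 hR₁
        have hsq : (min s R₁) ^ 2 ≤ R₁ ^ 2 := pow_le_pow_left₀ hm (min_le_right _ _) 2
        have hE : 1 ≤ Real.exp (L * (R₁ ^ 2 - (min s R₁) ^ 2) / 4) := by
          apply Real.one_le_exp
          have : 0 ≤ R₁ ^ 2 - (min s R₁) ^ 2 := by linarith
          positivity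
        nlinarith [mul_nonneg (sub_nonneg.2 hE) hl.le, mul_nonneg (sub_nonneg.2 hE) hk.le])
    rw [intervalIntegral.integral_const] at h
    simp only [sub_zero, smul_eq_mul] at h
    rw [one_div, mul_comm]
    exact h
  · have h := intervalIntegral.integral_mono_on hr hint
      (intervalIntegrable_const (c := Real.exp (L * R₁ ^ 2 / 4) * κ⁻¹ +
        (Real.exp (L * R₁ ^ 2 / 4) - 1) * L⁻¹)) (fun s hs => by
        have hE : Real.exp (L * (R₁ ^ 2 - (min s R₁) ^ 2) / 4) ≤ Real.exp (L * R₁ ^ 2 / 4) := by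
          apply Real.exp_le_exp.2
          nlinarith [mul_nonneg hL.le (sq_nonneg (min s R₁))]
        gcongr)
    rw [intervalIntegral.integral_const] at h
    simp only [sub_zero, smul_eq_mul] at h
    rw [mul_comm _ r]
    exact h
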